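/- Let X ∈ ℝ^{n×n} have rank r with condition number κ = σ₁(X)/σ_r(X), let y = 𝒜(X), and suppose the linear operator 𝒜 : ℝ^{n×n} → ℝ^m satisfies the restricted isometry property of rank 3r with constant δ_{3r} < 1/(12 κ √r). Consider the Riemannian gradient descent (RGrad) iteration: G_k = 𝒜*(y − 𝒜(Z_k)), Z_{k+1} = 𝒯_r(Z_k + α_k 𝒫_{T_k}(G_k)), where T_k = {U_k B^T + C V_k^T : B, C ∈ ℝ^{n×r}} is the tangent space of the rank-r matrix manifold at Z_k (with Z_k = U_k Σ_k V_k^T the compact SVD), 𝒫_{T_k} is the orthogonal projection onto T_k, and the stepsize is α_k = ‖𝒫_{T_k}(G_k)‖_F² / ‖𝒜(𝒫_{T_k}(G_k))‖₂², initialized by spectral initialization Z₀ = 𝒯_r(𝒜*(y)). Then the iterates converge linearly to X: there exists ρ ∈ (0,1) such that ‖Z_k − X‖_F ≤ ρ^k ‖Z₀ − X‖_F for all k. -/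

import Mathlib

noncomputable section

open scoped BigOperators
open Matrix

/-- Frobenius norm of a real matrix. -/
def frobNorm {n₁ n₂ : ℕ} (A : Matrix (Fin n₁) (Fin n₂) ℝ) : ℝ :=
  Real.sqrt (∑ i, ∑ j, (A i j) ^ 2)

/-- Euclidean (ℓ₂) norm of a real vector. -/
def l2norm {m : ℕ} (y : Fin m → ℝ) : ℝ :=
  Real.sqrt (∑ i, (y i) ^ 2)

/-- Frobenius (trace) inner product. -/
def frobInner {n : ℕ} (A B : Matrix (Fin n) (Fin n) ℝ) : ℝ :=
  ∑ i, ∑ j, A i j * B i j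

/-- Restricted isometry property of rank `s` with constant `δ`. -/
def HasRIP {n m : ℕ} (A : Matrix (Fin n) (Fin n) ℝ → (Fin m → ℝ)) (s : ℕ) (δ : ℝ) : Prop :=
  ∀ Z : Matrix (Fin n) (Fin n) ℝ, Z.rank ≤ s →
    (1 - δ) * frobNorm Z ^ 2 ≤ l2norm (A Z) ^ 2 ∧
    l2norm (A Z) ^ 2 ≤ (1 + δ) * frobNorm Z ^ 2

/-- `Z` is a best rank-`r` approximation of `M` in Frobenius norm. -/
def IsBestRankApprox {n : ℕ} (r : ℕ) (M Z : Matrix (Fin n) (Fin n) ℝ) : Prop :=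
  Z.rank ≤ r ∧ ∀ W : Matrix (Fin n) (Fin n) ℝ, W.rank ≤ r →
    frobNorm (M - Z) ≤ frobNorm (M - W)

/-- `P` is the orthogonal projection (w.r.t. the Frobenius inner product) of `G` onto the
tangent space `T = {U Bᵀ + C Vᵀ}` of the rank-`r` manifold. -/
def IsTanProj {n r : ℕ} (U V : Matrix (Fin n) (Fin r) ℝ)
    (G P : Matrix (Fin n) (Fin n) ℝ) : Prop :=
  (∃ B C : Matrix (Fin n) (Fin r) ℝ, P = U * Bᵀ + C * Vᵀ) ∧
  ∀ B C : Matrix (Fin n) (Fin r) ℝ, frobInner (G - P) (U * Bᵀ + C * Vᵀ) = 0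

/-!
Let `T` be the tangent space at the iterate `Z` and split the error `X - Z` into a tangential part
`H` and a normal part `N`. On `T + ℝ N`, whose elements have rank at most `3r`, the operator
`𝒜* 𝒜` is close to the identity, so the projected gradient `P` and its exact line-search multiple
`α P` stay within `O(δ) ‖X - Z‖` of `H`. Because `X` itself has rank `r`, the manifold is curved by
at most `1 / σ_r` near it: `‖N‖ ≤ ‖X - Z‖² / σ_r`. Truncation to rank `r` at most doubles the
error, which gives a contraction as soon as `‖X - Z‖ ≤ σ_r / 6`; spectral initialization lands in
this basin since `‖Z₀ - X‖ ≤ 2δ ‖X‖ ≤ 2δ √r σ₁`.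
-/

lemma le_of_sq_le_mul {a b : ℝ} (hb : 0 ≤ b) (h : a ^ 2 ≤ b * a) : a ≤ b := by
  by_contra! hlt
  nlinarith

section NearIsometry

open scoped InnerProductSpace

variable {E F : Type*} [NormedAddCommGroup E] [InnerProductSpace ℝ E]
  [NormedAddCommGroup F] [InnerProductSpace ℝ F]
  {A : E →ₗ[ℝ] F} {T W : Submodule ℝ E} {δ : ℝ}

/-- `A` preserves the squared norm on the subspace `W` up to a relative error `δ`. A rank-`s`
restricted isometry has this property on every space of matrices of rank at most `s`. -/
def IsNearIsometryOn (A : E →ₗ[ℝ] F) (W : Submodule ℝ E) (δ : ℝ) : Prop :=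
  ∀ x ∈ W, |‖A x‖ ^ 2 - ‖x‖ ^ 2| ≤ δ * ‖x‖ ^ 2

lemma IsNearIsometryOn.mul_norm_nonneg (hA : IsNearIsometryOn A W δ) {x : E} (hx : x ∈ W) :
    0 ≤ δ * ‖x‖ := by
  rcases eq_or_ne x 0 with rfl | hx0
  · simp
  have hsq := (abs_nonneg _).trans (hA x hx)
  rw [sq, ← mul_assoc] at hsq
  exact nonneg_of_mul_nonneg_left hsq (norm_pos_iff.mpr hx0)

lemma IsNearIsometryOn.two_mul_abs_inner_map_sub_inner_le (hA : IsNearIsometryOn A W δ)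
    {x y : E} (hx : x ∈ W) (hy : y ∈ W) :
    2 * |⟪A x, A y⟫_ℝ - ⟪x, y⟫_ℝ| ≤ δ * (‖x‖ ^ 2 + ‖y‖ ^ 2) := by
  have hadd := abs_le.mp (hA _ (W.add_mem hx hy))
  have hsub := abs_le.mp (hA _ (W.sub_mem hx hy))
  simp only [map_add, map_sub, norm_add_sq_real, norm_sub_sq_real] at hadd hsub
  rw [← abs_two, ← abs_mul, abs_le]
  constructor <;> linarith

lemma IsNearIsometryOn.abs_inner_map_sub_inner_le (hA : IsNearIsometryOn A W δ)
    {x y : E} (hx : x ∈ W) (hy : y ∈ W) :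
    |⟪A x, A y⟫_ℝ - ⟪x, y⟫_ℝ| ≤ δ * (‖x‖ * ‖y‖) := by
  rcases eq_or_ne x 0 with rfl | hx0
  · simp
  rcases eq_or_ne y 0 with rfl | hy0
  · simp
  have hpos : 0 < ‖x‖ * ‖y‖ := by positivity
  -- rescaling `x` and `y` to the same norm turns the arithmetic mean into the geometric one
  have h := hA.two_mul_abs_inner_map_sub_inner_le
    (W.smul_mem ‖y‖ hx) (W.smul_mem ‖x‖ hy)
  simp only [map_smul, real_inner_smul_left, real_inner_smul_right, norm_smul, norm_norm,
    ← mul_sub, abs_mul, abs_norm] at h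
  refine le_of_mul_le_mul_left ?_ hpos
  linarith

lemma IsNearIsometryOn.norm_projected_gradient_sub_le (hA : IsNearIsometryOn A W δ)
    (hTW : T ≤ W) {D H P : E} (hD : D ∈ W) (hH : H ∈ T) (hDH : D - H ∈ Tᗮ) (hP : P ∈ T)
    (hgrad : ∀ Q ∈ T, ⟪P, Q⟫_ℝ = ⟪A D, A Q⟫_ℝ) :
    ‖P - H‖ ≤ δ * ‖D‖ := by
  have hPH : P - H ∈ T := T.sub_mem hP hH
  have hnear := (abs_le.mp (hA.abs_inner_map_sub_inner_le hD (hTW hPH))).2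
  have hDQ : ⟪D, P - H⟫_ℝ = ⟪H, P - H⟫_ℝ := by
    rw [← sub_eq_zero, ← inner_sub_left]
    exact Submodule.inner_left_of_mem_orthogonal hPH hDH
  rw [← hgrad _ hPH, hDQ, ← inner_sub_left, real_inner_self_eq_norm_sq, ← mul_assoc] at hnear
  exact le_of_sq_le_mul (hA.mul_norm_nonneg hD) hnear

lemma IsNearIsometryOn.norm_exactStep_smul_sub_le (hA : IsNearIsometryOn A W δ) (hδ : δ < 1)
    {P : E} (hP : P ∈ W) :
    ‖(‖P‖ ^ 2 / ‖A P‖ ^ 2) • P - P‖ ≤ δ / (1 - δ) * ‖P‖ := by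
  rcases eq_or_ne P 0 with rfl | hP0
  · simp
  have hP2 : 0 < ‖P‖ ^ 2 := by positivity
  have hnear := hA P hP
  have hAP : (1 - δ) * ‖P‖ ^ 2 ≤ ‖A P‖ ^ 2 := by linarith [(abs_le.mp hnear).1]
  have hAP0 : 0 < ‖A P‖ ^ 2 := (mul_pos (sub_pos.mpr hδ) hP2).trans_le hAP
  have hδ0 : 0 ≤ δ := nonneg_of_mul_nonneg_left ((abs_nonneg _).trans hnear) hP2
  have hα : |‖P‖ ^ 2 / ‖A P‖ ^ 2 - 1| ≤ δ / (1 - δ) := by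
    rw [div_sub_one hAP0.ne', abs_div, abs_of_pos hAP0, abs_sub_comm,
      div_le_div_iff₀ hAP0 (sub_pos.mpr hδ)]
    nlinarith
  calc ‖(‖P‖ ^ 2 / ‖A P‖ ^ 2) • P - P‖
      = |‖P‖ ^ 2 / ‖A P‖ ^ 2 - 1| * ‖P‖ := by
        rw [← Real.norm_eq_abs, ← norm_smul, sub_smul, one_smul]
    _ ≤ δ / (1 - δ) * ‖P‖ := by gcongr

lemma norm_le_norm_of_sub_mem_orthogonal {D H : E} (hH : H ∈ T) (hDH : D - H ∈ Tᗮ) :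
    ‖H‖ ≤ ‖D‖ := by
  have h := norm_add_sq_eq_norm_sq_add_norm_sq_of_inner_eq_zero H (D - H)
    (Submodule.inner_right_of_mem_orthogonal hH hDH)
  rw [add_sub_cancel] at h
  nlinarith [norm_nonneg H, norm_nonneg D, norm_nonneg (D - H)]

lemma IsNearIsometryOn.norm_exactStep_projected_gradient_sub_le (hA : IsNearIsometryOn A W δ)
    (hδ0 : 0 ≤ δ) (hδ : δ < 1) (hTW : T ≤ W) {D H P : E} (hD : D ∈ W) (hH : H ∈ T)
    (hDH : D - H ∈ Tᗮ) (hP : P ∈ T) (hgrad : ∀ Q ∈ T, ⟪P, Q⟫_ℝ = ⟪A D, A Q⟫_ℝ) :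
    ‖(‖P‖ ^ 2 / ‖A P‖ ^ 2) • P - H‖ ≤ 2 * δ / (1 - δ) * ‖D‖ := by
  have hgradient := hA.norm_projected_gradient_sub_le hTW hD hH hDH hP hgrad
  have hP_le : ‖P‖ ≤ (1 + δ) * ‖D‖ := by
    linarith [norm_le_norm_add_norm_sub' P H, norm_le_norm_of_sub_mem_orthogonal hH hDH]
  have hδ' : 0 < 1 - δ := sub_pos.mpr hδ
  calc ‖(‖P‖ ^ 2 / ‖A P‖ ^ 2) • P - H‖
      ≤ ‖(‖P‖ ^ 2 / ‖A P‖ ^ 2) • P - P‖ + ‖P - H‖ := norm_sub_le_norm_sub_add_norm_sub _ _ _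
    _ ≤ δ / (1 - δ) * ((1 + δ) * ‖D‖) + δ * ‖D‖ :=
        add_le_add ((hA.norm_exactStep_smul_sub_le hδ (hTW hP)).trans (by gcongr)) hgradient
    _ = 2 * δ / (1 - δ) * ‖D‖ := by field_simp; ring

lemma norm_sub_sq_le_two_mul_inner_of_norm_sub_le {M X Z : E} (h : ‖M - Z‖ ≤ ‖M - X‖) :
    ‖Z - X‖ ^ 2 ≤ 2 * ⟪M - X, Z - X⟫_ℝ := by
  have hsq : ‖M - Z‖ ^ 2 ≤ ‖M - X‖ ^ 2 := by gcongr
  rw [← sub_sub_sub_cancel_right M Z X, norm_sub_sq_real] at hsq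
  linarith

lemma IsNearIsometryOn.norm_sub_le_of_backprojection (hA : IsNearIsometryOn A W δ)
    {M X Z : E} (hX : X ∈ W) (hZ : Z ∈ W) (hM : ∀ Q : E, ⟪M, Q⟫_ℝ = ⟪A X, A Q⟫_ℝ)
    (hbest : ‖M - Z‖ ≤ ‖M - X‖) :
    ‖Z - X‖ ≤ 2 * δ * ‖X‖ := by
  have hsq := norm_sub_sq_le_two_mul_inner_of_norm_sub_le hbest
  have hnear := (abs_le.mp (hA.abs_inner_map_sub_inner_le hX (W.sub_mem hZ hX))).2
  rw [inner_sub_left, hM] at hsq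
  exact le_of_sq_le_mul (by linarith [hA.mul_norm_nonneg hX]) (by linarith)

end NearIsometry

section RankInequalities

variable {𝕜 m n : Type*} [Field 𝕜] [Fintype n]

lemma rank_add_le (M N : Matrix m n 𝕜) : (M + N).rank ≤ M.rank + N.rank := by
  rw [Matrix.rank, Matrix.mulVecLin_add]
  exact (Submodule.finrank_mono (LinearMap.range_add_le _ _)).trans
    (Submodule.finrank_add_le_finrank_add_finrank _ _)

lemma rank_le_of_mem_sup {S T : Submodule 𝕜 (Matrix m n 𝕜)} {s t : ℕ}
    (hS : ∀ M ∈ S, M.rank ≤ s) (hT : ∀ M ∈ T, M.rank ≤ t) {M : Matrix m n 𝕜}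
    (hM : M ∈ S ⊔ T) : M.rank ≤ s + t := by
  obtain ⟨K, hK, L, hL, rfl⟩ := Submodule.mem_sup.mp hM
  exact (rank_add_le K L).trans (add_le_add (hS K hK) (hT L hL))

lemma rank_smul_le (c : 𝕜) (M : Matrix m n 𝕜) : (c • M).rank ≤ M.rank := by
  classical
  rw [Matrix.smul_eq_mul_diagonal]
  exact Matrix.rank_mul_le_left _ _

lemma rank_le_of_mem_span_singleton {M N : Matrix m n 𝕜}
    (hM : M ∈ Submodule.span 𝕜 {N}) : M.rank ≤ N.rank := by
  obtain ⟨c, rfl⟩ := Submodule.mem_span_singleton.mp hM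
  exact rank_smul_le c N

end RankInequalities

section FrobeniusGeometry

open scoped Matrix.Norms.Frobenius MatrixOrder InnerProductSpace

variable {ι κ m n p : Type*} [Fintype ι] [Fintype κ] [Fintype m] [Fintype n] [Fintype p]

lemma frobenius_norm_sq_eq_sum (M : Matrix m n ℝ) : ‖M‖ ^ 2 = ∑ i, ∑ j, M i j ^ 2 := by
  rw [Matrix.frobenius_norm_def, ← Real.sqrt_eq_rpow, Real.sq_sqrt (by positivity)]
  simp

/-- The Frobenius inner product `∑ i, ∑ j, M i j * N i j`, compatible with Mathlib's Frobenius
norm; like that norm, it is only a local instance. -/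
@[reducible]
def frobeniusInnerProductSpace : InnerProductSpace ℝ (Matrix m n ℝ) where
  inner M N := ∑ i, ∑ j, M i j * N i j
  norm_sq_eq_re_inner M := (frobenius_norm_sq_eq_sum M).trans (by simp [sq])
  conj_inner_symm M N := by simp [mul_comm]
  add_left M N L := by simp [add_mul, Finset.sum_add_distrib]
  smul_left M N c := by simp [Finset.mul_sum, mul_assoc]

attribute [local instance] frobeniusInnerProductSpace

lemma frobenius_inner_eq_trace (M N : Matrix m n ℝ) : ⟪M, N⟫_ℝ = (M * Nᵀ).trace := by
  simp [inner, Matrix.trace, Matrix.mul_apply]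

lemma frobenius_norm_mul_le_of_mul_transpose_le_one [DecidableEq n] {C : Matrix n p ℝ}
    (hC : C * Cᵀ ≤ 1) (M : Matrix m n ℝ) : ‖M * C‖ ≤ ‖M‖ := by
  have htrace : 0 ≤ (M * (1 - C * Cᵀ) * Mᴴ).trace :=
    ((Matrix.le_iff.mp hC).mul_mul_conjTranspose_same M).trace_nonneg
  have hexpand : M * (1 - C * Cᵀ) * Mᴴ = M * Mᵀ - M * C * (M * C)ᵀ := by
    simp only [Matrix.conjTranspose_eq_transpose_of_trivial, Matrix.transpose_mul,
      Matrix.mul_sub, Matrix.sub_mul, Matrix.mul_one, Matrix.mul_assoc]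
  rw [hexpand, Matrix.trace_sub, ← frobenius_inner_eq_trace, ← frobenius_inner_eq_trace,
    real_inner_self_eq_norm_sq, real_inner_self_eq_norm_sq, sub_nonneg] at htrace
  exact le_of_sq_le_sq htrace (norm_nonneg M)

lemma frobenius_norm_mul_le_of_transpose_mul_le_one [DecidableEq n] {C : Matrix p n ℝ}
    (hC : Cᵀ * C ≤ 1) (M : Matrix n m ℝ) : ‖C * M‖ ≤ ‖M‖ := by
  rw [← Matrix.frobenius_norm_transpose, ← Matrix.frobenius_norm_transpose M,
    Matrix.transpose_mul]
  exact frobenius_norm_mul_le_of_mul_transpose_le_one (by rwa [Matrix.transpose_transpose]) _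

lemma isStarProjection_mul_transpose [DecidableEq ι] {U : Matrix m ι ℝ} (hU : Uᵀ * U = 1) :
    IsStarProjection (U * Uᵀ) where
  isIdempotentElem := by
    rw [IsIdempotentElem, Matrix.mul_assoc, ← Matrix.mul_assoc Uᵀ, hU, Matrix.one_mul]
  isSelfAdjoint := by
    rw [isSelfAdjoint_iff, Matrix.star_eq_conjTranspose,
      Matrix.conjTranspose_eq_transpose_of_trivial, Matrix.transpose_mul,
      Matrix.transpose_transpose]

lemma transpose_eq_of_isStarProjection {Q : Matrix m m ℝ} (hQ : IsStarProjection Q) :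
    Qᵀ = Q := by
  rw [← Matrix.conjTranspose_eq_transpose_of_trivial]
  exact hQ.isSelfAdjoint

lemma frobenius_norm_mul_isStarProjection_le {Q : Matrix n n ℝ}
    (hQ : IsStarProjection Q) (M : Matrix m n ℝ) : ‖M * Q‖ ≤ ‖M‖ := by
  classical
  refine frobenius_norm_mul_le_of_mul_transpose_le_one ?_ M
  rw [transpose_eq_of_isStarProjection hQ, hQ.isIdempotentElem]
  exact hQ.le_one

lemma frobenius_norm_isStarProjection_mul_le {Q : Matrix n n ℝ}
    (hQ : IsStarProjection Q) (M : Matrix n m ℝ) : ‖Q * M‖ ≤ ‖M‖ := by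
  classical
  refine frobenius_norm_mul_le_of_transpose_mul_le_one ?_ M
  rw [transpose_eq_of_isStarProjection hQ, hQ.isIdempotentElem]
  exact hQ.le_one

section SingularValues

variable [DecidableEq ι] {U : Matrix m ι ℝ} {V : Matrix n ι ℝ} {σ : ι → ℝ}

lemma diagonal_mul_transpose_le_one {d : ι → ℝ} (hd : ∀ i, |d i| ≤ 1) :
    Matrix.diagonal d * (Matrix.diagonal d)ᵀ ≤ 1 := by
  rw [Matrix.le_iff, Matrix.diagonal_transpose, Matrix.diagonal_mul_diagonal,
    ← Matrix.diagonal_one, Matrix.diagonal_sub, Matrix.posSemidef_diagonal_iff]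
  exact fun i => sub_nonneg.mpr (by nlinarith [abs_le.mp (hd i)])

lemma frobenius_norm_svd_le (hU : Uᵀ * U = 1) (hV : Vᵀ * V = 1) (σ : ι → ℝ) :
    ‖U * Matrix.diagonal σ * Vᵀ‖ ≤ √(Fintype.card ι) * ‖σ‖ :=
  calc ‖U * Matrix.diagonal σ * Vᵀ‖
      ≤ ‖U * Matrix.diagonal σ‖ := frobenius_norm_mul_le_of_mul_transpose_le_one (by simp [hV]) _
    _ ≤ ‖Matrix.diagonal σ‖ := frobenius_norm_mul_le_of_transpose_mul_le_one hU.le _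
    _ = √(∑ i, ‖σ i‖ ^ 2) := by rw [Matrix.frobenius_norm_diagonal, EuclideanSpace.norm_eq]
    _ ≤ √(∑ _i : ι, ‖σ‖ ^ 2) := by gcongr with i; exact norm_le_pi_norm σ i
    _ = √(Fintype.card ι) * ‖σ‖ := by simp

-- `X = X (V Σ⁻¹ Uᵀ) X`, and the factor `s` turns `Σ⁻¹` into a contraction when `s ≤ σ i`.
omit [Fintype κ] [Fintype p] in
lemma smul_mul_svd_mul_eq (hU : Uᵀ * U = 1) (hV : Vᵀ * V = 1) (hσ : ∀ i, σ i ≠ 0) (s : ℝ)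
    (L : Matrix p m ℝ) (R : Matrix n κ ℝ) {X : Matrix m n ℝ}
    (hX : X = U * Matrix.diagonal σ * Vᵀ) :
    s • (L * X * R) = L * X * V * Matrix.diagonal (fun i => s / σ i) * (Uᵀ * (X * R)) := by
  have hXV : X * V * Matrix.diagonal (fun i => s / σ i) = s • U := by
    have hdiag : (fun i => σ i * (s / σ i)) = s • 1 :=
      funext fun i => by simp [mul_div_cancel₀ s (hσ i)]
    rw [hX, Matrix.mul_assoc _ Vᵀ, hV, Matrix.mul_one, Matrix.mul_assoc,
      Matrix.diagonal_mul_diagonal, hdiag, Matrix.diagonal_smul]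
    simp
  have hUX : U * (Uᵀ * X) = X := by
    rw [hX, Matrix.mul_assoc U, ← Matrix.mul_assoc Uᵀ, hU, Matrix.one_mul]
  calc s • (L * X * R) = L * (s • U) * (Uᵀ * X) * R := by
        rw [Matrix.mul_smul, Matrix.smul_mul, Matrix.smul_mul, Matrix.mul_assoc L U, hUX]
    _ = L * X * V * Matrix.diagonal (fun i => s / σ i) * (Uᵀ * (X * R)) := by
        rw [← hXV]
        simp only [Matrix.mul_assoc]

lemma mul_frobenius_norm_mul_svd_mul_le (hU : Uᵀ * U = 1) (hV : Vᵀ * V = 1) {s : ℝ}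
    (hs : 0 < s) (hσ : ∀ i, s ≤ σ i) (L : Matrix p m ℝ) (R : Matrix n κ ℝ)
    {X : Matrix m n ℝ} (hX : X = U * Matrix.diagonal σ * Vᵀ) :
    s * ‖L * X * R‖ ≤ ‖L * X‖ * ‖X * R‖ := by
  classical
  have hσ_pos : ∀ i, 0 < σ i := fun i => hs.trans_le (hσ i)
  have hcontract : ∀ i, |s / σ i| ≤ 1 := fun i => by
    rw [abs_of_pos (div_pos hs (hσ_pos i))]
    exact div_le_one_of_le₀ (hσ i) (hσ_pos i).le
  calc s * ‖L * X * R‖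
      = ‖L * X * V * Matrix.diagonal (fun i => s / σ i) * (Uᵀ * (X * R))‖ := by
        rw [← smul_mul_svd_mul_eq hU hV (fun i => (hσ_pos i).ne') s L R hX, norm_smul,
          Real.norm_of_nonneg hs.le]
    _ ≤ ‖L * X * V * Matrix.diagonal (fun i => s / σ i)‖ * ‖Uᵀ * (X * R)‖ :=
        Matrix.frobenius_norm_mul _ _
    _ ≤ ‖L * X‖ * ‖X * R‖ := by
        gcongr
        · exact (frobenius_norm_mul_le_of_mul_transpose_le_one
            (diagonal_mul_transpose_le_one hcontract) _).trans
            (frobenius_norm_mul_le_of_mul_transpose_le_one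
              (isStarProjection_mul_transpose hV).le_one _)
        · exact frobenius_norm_mul_le_of_transpose_mul_le_one
            (by rw [Matrix.transpose_transpose]; exact (isStarProjection_mul_transpose hU).le_one) _

end SingularValues

section TangentSpace

/-- The tangent space `{U Bᵀ + C Vᵀ}` of the manifold of rank-`r` matrices at a matrix with
column space spanned by `U` and row space spanned by `V`. -/
def tangentSpace (U : Matrix m κ ℝ) (V : Matrix n κ ℝ) : Submodule ℝ (Matrix m n ℝ) where
  carrier := {M | ∃ (B : Matrix n κ ℝ) (C : Matrix m κ ℝ), M = U * Bᵀ + C * Vᵀ}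
  add_mem' := by
    rintro _ _ ⟨B, C, rfl⟩ ⟨B', C', rfl⟩
    refine ⟨B + B', C + C', ?_⟩
    rw [Matrix.transpose_add, Matrix.mul_add, Matrix.add_mul, add_add_add_comm]
  zero_mem' := ⟨0, 0, by simp⟩
  smul_mem' := by
    rintro c _ ⟨B, C, rfl⟩
    exact ⟨c • B, c • C, by simp⟩

omit [Fintype m] in
lemma rank_le_of_mem_tangentSpace {U : Matrix m κ ℝ} {V : Matrix n κ ℝ} {M : Matrix m n ℝ}
    (hM : M ∈ tangentSpace U V) : M.rank ≤ 2 * Fintype.card κ := by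
  obtain ⟨B, C, rfl⟩ := hM
  have hleft := (Matrix.rank_mul_le_left U Bᵀ).trans (Matrix.rank_le_card_width U)
  have hright := (Matrix.rank_mul_le_left C Vᵀ).trans (Matrix.rank_le_card_width C)
  linarith [rank_add_le (U * Bᵀ) (C * Vᵀ)]

variable [DecidableEq m] [DecidableEq n] {U : Matrix m κ ℝ} {V : Matrix n κ ℝ}

/-- The component `(1 - U Uᵀ) M (1 - V Vᵀ)` of `M` orthogonal to `tangentSpace U V`, for `U` and
`V` with orthonormal columns. -/
def normalComponent (U : Matrix m κ ℝ) (V : Matrix n κ ℝ) (M : Matrix m n ℝ) : Matrix m n ℝ :=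
  (1 - U * Uᵀ) * M * (1 - V * Vᵀ)

lemma rank_normalComponent_le (M : Matrix m n ℝ) : (normalComponent U V M).rank ≤ M.rank :=
  (Matrix.rank_mul_le_left _ _).trans (Matrix.rank_mul_le_right _ _)

lemma sub_normalComponent_mem_tangentSpace (M : Matrix m n ℝ) :
    M - normalComponent U V M ∈ tangentSpace U V := by
  refine ⟨(Uᵀ * M)ᵀ, (1 - U * Uᵀ) * M * V, ?_⟩
  simp only [normalComponent, Matrix.transpose_transpose, Matrix.mul_sub, Matrix.sub_mul,
    Matrix.mul_one, Matrix.one_mul, Matrix.mul_assoc]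
  abel

variable [DecidableEq κ]

lemma one_sub_mul_transpose_mul_self (hU : Uᵀ * U = 1) : (1 - U * Uᵀ) * U = 0 := by
  rw [Matrix.sub_mul, Matrix.mul_assoc, hU, Matrix.one_mul, Matrix.mul_one, sub_self]

lemma transpose_mul_one_sub_mul_transpose (hU : Uᵀ * U = 1) : Uᵀ * (1 - U * Uᵀ) = 0 := by
  rw [Matrix.mul_sub, ← Matrix.mul_assoc, hU, Matrix.one_mul, Matrix.mul_one, sub_self]

lemma normalComponent_mem_orthogonal (hU : Uᵀ * U = 1) (hV : Vᵀ * V = 1) (M : Matrix m n ℝ) :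
    normalComponent U V M ∈ (tangentSpace U V)ᗮ := by
  rw [Submodule.mem_orthogonal']
  rintro _ ⟨B, C, rfl⟩
  have hleft : Uᵀ * normalComponent U V M = 0 := by
    rw [normalComponent, Matrix.mul_assoc, ← Matrix.mul_assoc,
      transpose_mul_one_sub_mul_transpose hU, Matrix.zero_mul]
  have hright : normalComponent U V M * V = 0 := by
    rw [normalComponent, Matrix.mul_assoc, one_sub_mul_transpose_mul_self hV, Matrix.mul_zero]
  have hUB : ⟪normalComponent U V M, U * Bᵀ⟫_ℝ = 0 := by
    rw [frobenius_inner_eq_trace, Matrix.transpose_mul, Matrix.trace_mul_comm, Matrix.mul_assoc,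
      hleft, Matrix.mul_zero, Matrix.trace_zero]
  have hCV : ⟪normalComponent U V M, C * Vᵀ⟫_ℝ = 0 := by
    rw [frobenius_inner_eq_trace, Matrix.transpose_mul, Matrix.transpose_transpose,
      ← Matrix.mul_assoc, hright, Matrix.zero_mul, Matrix.trace_zero]
  rw [inner_add_right, hUB, hCV, add_zero]

lemma normalComponent_sub_mul_mul_transpose (hU : Uᵀ * U = 1) (M : Matrix m n ℝ)
    (K : Matrix κ κ ℝ) :
    normalComponent U V (M - U * K * Vᵀ) = normalComponent U V M := by
  simp only [normalComponent, Matrix.mul_sub (1 - U * Uᵀ), ← Matrix.mul_assoc,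
    one_sub_mul_transpose_mul_self hU, Matrix.zero_mul, sub_zero]

-- Both projections annihilate `U K Vᵀ`, so each of the two factors from
-- `mul_frobenius_norm_mul_svd_mul_le` is bounded by the distance: this is the curvature estimate.
lemma mul_frobenius_norm_normalComponent_le [DecidableEq ι] {U₀ : Matrix m ι ℝ}
    {V₀ : Matrix n ι ℝ} {σ : ι → ℝ} (hU₀ : U₀ᵀ * U₀ = 1) (hV₀ : V₀ᵀ * V₀ = 1)
    {s : ℝ} (hs : 0 < s) (hσ : ∀ i, s ≤ σ i) {X : Matrix m n ℝ}
    (hX : X = U₀ * Matrix.diagonal σ * V₀ᵀ) (hU : Uᵀ * U = 1) (hV : Vᵀ * V = 1)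
    (K : Matrix κ κ ℝ) :
    s * ‖normalComponent U V X‖ ≤ ‖X - U * K * Vᵀ‖ ^ 2 := by
  have hleft : (1 - U * Uᵀ) * X = (1 - U * Uᵀ) * (X - U * K * Vᵀ) := by
    rw [Matrix.mul_sub _ X, ← Matrix.mul_assoc, ← Matrix.mul_assoc,
      one_sub_mul_transpose_mul_self hU, Matrix.zero_mul, Matrix.zero_mul, sub_zero]
  have hright : X * (1 - V * Vᵀ) = (X - U * K * Vᵀ) * (1 - V * Vᵀ) := by
    rw [Matrix.sub_mul X, Matrix.mul_assoc _ Vᵀ, transpose_mul_one_sub_mul_transpose hV,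
      Matrix.mul_zero, sub_zero]
  calc s * ‖normalComponent U V X‖
      ≤ ‖(1 - U * Uᵀ) * X‖ * ‖X * (1 - V * Vᵀ)‖ :=
        mul_frobenius_norm_mul_svd_mul_le hU₀ hV₀ hs hσ _ _ hX
    _ ≤ ‖X - U * K * Vᵀ‖ * ‖X - U * K * Vᵀ‖ := by
        rw [hleft, hright]
        gcongr
        · exact frobenius_norm_isStarProjection_mul_le (isStarProjection_mul_transpose hU).one_sub _
        · exact frobenius_norm_mul_isStarProjection_le (isStarProjection_mul_transpose hV).one_sub _
    _ = ‖X - U * K * Vᵀ‖ ^ 2 := (sq _).symm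

end TangentSpace

section MatrixSensing

variable {n m r : ℕ} {X Z M P : Matrix (Fin n) (Fin n) ℝ} {δ s : ℝ}
  {𝒜 : Matrix (Fin n) (Fin n) ℝ →ₗ[ℝ] (Fin m → ℝ)}
  {𝒜s : (Fin m → ℝ) →ₗ[ℝ] Matrix (Fin n) (Fin n) ℝ}

lemma frobNorm_eq_norm {n₁ n₂ : ℕ} (M : Matrix (Fin n₁) (Fin n₂) ℝ) : frobNorm M = ‖M‖ := by
  rw [frobNorm, ← frobenius_norm_sq_eq_sum, Real.sqrt_sq (norm_nonneg M)]

lemma frobInner_eq_inner (M N : Matrix (Fin n) (Fin n) ℝ) : frobInner M N = ⟪M, N⟫_ℝ := rfl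

lemma l2norm_eq_norm (y : Fin m → ℝ) : l2norm y = ‖WithLp.toLp 2 y‖ := by
  simp [l2norm, EuclideanSpace.norm_eq]

/-- The measurement operator `𝒜` with its values in Euclidean space, so that `l2norm` becomes
the norm of an inner product space. -/
def measurementMap (𝒜 : Matrix (Fin n) (Fin n) ℝ →ₗ[ℝ] (Fin m → ℝ)) :
    Matrix (Fin n) (Fin n) ℝ →ₗ[ℝ] EuclideanSpace ℝ (Fin m) :=
  (WithLp.linearEquiv 2 ℝ (Fin m → ℝ)).symm.toLinearMap ∘ₗ 𝒜

lemma l2norm_map_eq_norm (M : Matrix (Fin n) (Fin n) ℝ) :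
    l2norm (𝒜 M) = ‖measurementMap 𝒜 M‖ :=
  l2norm_eq_norm (𝒜 M)

lemma inner_adjoint_map_eq_inner
    (hadj : ∀ (Z : Matrix (Fin n) (Fin n) ℝ) (w : Fin m → ℝ),
      frobInner (𝒜s w) Z = ∑ ℓ, w ℓ * 𝒜 Z ℓ) (D Q : Matrix (Fin n) (Fin n) ℝ) :
    ⟪𝒜s (𝒜 D), Q⟫_ℝ = ⟪measurementMap 𝒜 D, measurementMap 𝒜 Q⟫_ℝ := by
  rw [← frobInner_eq_inner, hadj, PiLp.inner_apply]
  simp [measurementMap, mul_comm]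

lemma HasRIP.isNearIsometryOn {t : ℕ} (h : HasRIP (fun M => 𝒜 M) t δ)
    {W : Submodule ℝ (Matrix (Fin n) (Fin n) ℝ)} (hW : ∀ M ∈ W, M.rank ≤ t) :
    IsNearIsometryOn (measurementMap 𝒜) W δ := by
  intro M hM
  obtain ⟨hlower, hupper⟩ := h M (hW M hM)
  rw [l2norm_map_eq_norm, frobNorm_eq_norm] at hlower hupper
  rw [abs_le]
  constructor <;> linarith

lemma IsBestRankApprox.frobNorm_sub_le (h : IsBestRankApprox r M Z) (hX : X.rank ≤ r) :
    frobNorm (Z - X) ≤ 2 * frobNorm (M - X) := by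
  have hbest := h.2 X hX
  simp only [frobNorm_eq_norm] at hbest ⊢
  linarith [norm_sub_le_norm_sub_add_norm_sub Z M X, norm_sub_rev Z M]

lemma frobNorm_svd_le {U V : Matrix (Fin n) (Fin r) ℝ} {σ : Fin r → ℝ} (hU : Uᵀ * U = 1)
    (hV : Vᵀ * V = 1) (hσ : ∀ i, 0 ≤ σ i) :
    frobNorm (U * Matrix.diagonal σ * Vᵀ) ≤ √r * ⨆ i, σ i := by
  have hnorm : ‖σ‖ ≤ ⨆ i, σ i := by
    refine (pi_norm_le_iff_of_nonneg (Real.iSup_nonneg hσ)).mpr fun i => ?_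
    rw [Real.norm_of_nonneg (hσ i)]
    exact le_ciSup (Set.finite_range σ).bddAbove i
  have hsvd := frobenius_norm_svd_le hU hV σ
  rw [Fintype.card_fin] at hsvd
  rw [frobNorm_eq_norm]
  exact hsvd.trans (by gcongr)

lemma frobNorm_spectral_initialization_sub_le
    (hadj : ∀ (Z : Matrix (Fin n) (Fin n) ℝ) (w : Fin m → ℝ),
      frobInner (𝒜s w) Z = ∑ ℓ, w ℓ * 𝒜 Z ℓ)
    (hRIP : HasRIP (fun M => 𝒜 M) (3 * r) δ) (hX : X.rank ≤ r)
    (hZ : IsBestRankApprox r (𝒜s (𝒜 X)) Z) :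
    frobNorm (Z - X) ≤ 2 * δ * frobNorm X := by
  have hnear : IsNearIsometryOn (measurementMap 𝒜)
      (Submodule.span ℝ {X} ⊔ Submodule.span ℝ {Z}) δ :=
    hRIP.isNearIsometryOn fun M hM =>
      (rank_le_of_mem_sup (fun _ => rank_le_of_mem_span_singleton)
        (fun _ => rank_le_of_mem_span_singleton) hM).trans (by linarith [hZ.1])
  have hbest := hZ.2 X hX
  simp only [frobNorm_eq_norm] at hbest ⊢
  exact hnear.norm_sub_le_of_backprojection
    (Submodule.mem_sup_left (Submodule.mem_span_singleton_self X))
    (Submodule.mem_sup_right (Submodule.mem_span_singleton_self Z))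
    (inner_adjoint_map_eq_inner hadj X) hbest

section Iteration

variable {Uk Vk : Matrix (Fin n) (Fin r) ℝ}

lemma IsTanProj.mem_tangentSpace {G : Matrix (Fin n) (Fin n) ℝ} (h : IsTanProj Uk Vk G P) :
    P ∈ tangentSpace Uk Vk :=
  h.1

lemma IsTanProj.inner_eq {G Q : Matrix (Fin n) (Fin n) ℝ} (h : IsTanProj Uk Vk G P)
    (hQ : Q ∈ tangentSpace Uk Vk) : ⟪P, Q⟫_ℝ = ⟪G, Q⟫_ℝ := by
  obtain ⟨B, C, rfl⟩ := hQ
  have horth := h.2 B C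
  rw [frobInner_eq_inner, inner_sub_left] at horth
  exact (sub_eq_zero.mp horth).symm

lemma norm_rgrad_update_sub_le
    (hadj : ∀ (Z : Matrix (Fin n) (Fin n) ℝ) (w : Fin m → ℝ),
      frobInner (𝒜s w) Z = ∑ ℓ, w ℓ * 𝒜 Z ℓ)
    (hRIP : HasRIP (fun M => 𝒜 M) (3 * r) δ) (hδ0 : 0 ≤ δ) (hδ : δ < 1)
    (hUk : Ukᵀ * Uk = 1) (hVk : Vkᵀ * Vk = 1) (hP : IsTanProj Uk Vk (𝒜s (𝒜 X - 𝒜 Z)) P)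
    (hnormal : (normalComponent Uk Vk (X - Z)).rank ≤ r) :
    ‖Z + (‖P‖ ^ 2 / ‖measurementMap 𝒜 P‖ ^ 2) • P - X‖ ≤
      2 * δ / (1 - δ) * ‖Z - X‖ + ‖normalComponent Uk Vk (X - Z)‖ := by
  set N := normalComponent Uk Vk (X - Z)
  set α := ‖P‖ ^ 2 / ‖measurementMap 𝒜 P‖ ^ 2
  have hnear : IsNearIsometryOn (measurementMap 𝒜)
      (tangentSpace Uk Vk ⊔ Submodule.span ℝ {N}) δ :=
    hRIP.isNearIsometryOn fun M hM =>
      (rank_le_of_mem_sup (fun _ => rank_le_of_mem_tangentSpace)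
        (fun _ => rank_le_of_mem_span_singleton) hM).trans (by rw [Fintype.card_fin]; linarith)
  have htangent : X - Z - N ∈ tangentSpace Uk Vk := sub_normalComponent_mem_tangentSpace _
  have herror : X - Z ∈ tangentSpace Uk Vk ⊔ Submodule.span ℝ {N} := by
    rw [← sub_add_cancel (X - Z) N]
    exact Submodule.add_mem_sup htangent (Submodule.mem_span_singleton_self N)
  have horth : X - Z - (X - Z - N) ∈ (tangentSpace Uk Vk)ᗮ := by
    rw [sub_sub_cancel]
    exact normalComponent_mem_orthogonal hUk hVk _
  have hstep : ‖α • P - (X - Z - N)‖ ≤ 2 * δ / (1 - δ) * ‖X - Z‖ :=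
    hnear.norm_exactStep_projected_gradient_sub_le hδ0 hδ le_sup_left herror htangent horth
      hP.mem_tangentSpace fun Q hQ => by
        rw [hP.inner_eq hQ, ← map_sub, inner_adjoint_map_eq_inner hadj]
  calc ‖Z + α • P - X‖ = ‖α • P - (X - Z - N) - N‖ := by congr 1; abel
    _ ≤ ‖α • P - (X - Z - N)‖ + ‖N‖ := norm_sub_le _ _
    _ ≤ 2 * δ / (1 - δ) * ‖Z - X‖ + ‖N‖ := by rw [norm_sub_rev Z X]; gcongr

lemma frobNorm_rgrad_step_sub_le {U V : Matrix (Fin n) (Fin r) ℝ} {σ : Fin r → ℝ}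
    {K : Matrix (Fin r) (Fin r) ℝ} {Z' : Matrix (Fin n) (Fin n) ℝ}
    (hU : Uᵀ * U = 1) (hV : Vᵀ * V = 1) (hs : 0 < s) (hσ : ∀ i, s ≤ σ i)
    (hX : X = U * Matrix.diagonal σ * Vᵀ) (hrank : X.rank ≤ r)
    (hadj : ∀ (Z : Matrix (Fin n) (Fin n) ℝ) (w : Fin m → ℝ),
      frobInner (𝒜s w) Z = ∑ ℓ, w ℓ * 𝒜 Z ℓ)
    (hRIP : HasRIP (fun M => 𝒜 M) (3 * r) δ) (hδ0 : 0 ≤ δ) (hδ : δ < 1)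
    (hUk : Ukᵀ * Uk = 1) (hVk : Vkᵀ * Vk = 1) (hZ : Z = Uk * K * Vkᵀ)
    (hP : IsTanProj Uk Vk (𝒜s (𝒜 X - 𝒜 Z)) P)
    (hZ' : IsBestRankApprox r (Z + (frobNorm P ^ 2 / l2norm (𝒜 P) ^ 2) • P) Z') :
    frobNorm (Z' - X) ≤
      2 * (2 * δ / (1 - δ) + frobNorm (Z - X) / s) * frobNorm (Z - X) := by
  have hnormal : normalComponent Uk Vk (X - Z) = normalComponent Uk Vk X := by
    rw [hZ, normalComponent_sub_mul_mul_transpose hUk]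
  have hcurvature : ‖normalComponent Uk Vk (X - Z)‖ ≤ ‖Z - X‖ / s * ‖Z - X‖ := by
    have h := mul_frobenius_norm_normalComponent_le hU hV hs hσ hX hUk hVk K
    rw [← hZ, norm_sub_rev] at h
    rw [hnormal, div_mul_eq_mul_div, le_div_iff₀' hs, ← sq]
    exact h
  have hupdate := norm_rgrad_update_sub_le hadj hRIP hδ0 hδ hUk hVk hP
    (hnormal ▸ (rank_normalComponent_le X).trans hrank)
  have hthreshold := hZ'.frobNorm_sub_le hrank
  rw [l2norm_map_eq_norm] at hthreshold
  simp only [frobNorm_eq_norm] at hthreshold ⊢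
  linarith

end Iteration

end MatrixSensing

end FrobeniusGeometry

lemma condition_mul_lt_of_lt_one_div {δ a s c : ℝ} (hδ0 : 0 < δ) (hs : 0 ≤ s)
    (hδ : δ < 1 / (12 * (a / s) * c)) : 12 * δ * (c * a) < s := by
  have hden : 0 < 12 * (a / s) * c := one_div_pos.mp (hδ0.trans hδ)
  have hs0 : s ≠ 0 := by
    rintro rfl
    simp at hden
  have hspos : 0 < s := hs.lt_of_ne' hs0
  rw [lt_div_iff₀ hden] at hδ
  calc 12 * δ * (c * a) = δ * (12 * (a / s) * c) * s := by field_simp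
    _ < 1 * s := by gcongr
    _ = s := one_mul s

lemma le_pow_mul_of_basin {d : ℕ → ℝ} {ε ρ : ℝ} (hd : ∀ k, 0 ≤ d k) (hρ0 : 0 ≤ ρ) (hρ1 : ρ ≤ 1)
    (h0 : d 0 ≤ ε) (hstep : ∀ k, d k ≤ ε → d (k + 1) ≤ ρ * d k) (k : ℕ) :
    d k ≤ ρ ^ k * d 0 := by
  induction k with
  | zero => simp
  | succ k ih =>
    have hbasin : d k ≤ ε :=
      ih.trans ((mul_le_of_le_one_left (hd 0) (pow_le_one₀ hρ0 hρ1)).trans h0)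
    calc d (k + 1) ≤ ρ * d k := hstep k hbasin
      _ ≤ ρ * (ρ ^ k * d 0) := by gcongr
      _ = ρ ^ (k + 1) * d 0 := by ring

lemma iInf_le_sqrt_mul_iSup {r : ℕ} {σ : Fin r → ℝ} (hσ : ∀ i, 0 ≤ σ i) :
    ⨅ i, σ i ≤ √r * ⨆ i, σ i := by
  rcases r.eq_zero_or_pos with rfl | hr
  · simp
  have : Nonempty (Fin r) := Fin.pos_iff_nonempty.mp hr
  calc ⨅ i, σ i ≤ ⨆ i, σ i :=
        ciInf_le_ciSup (Set.finite_range σ).bddBelow (Set.finite_range σ).bddAbove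
    _ ≤ √r * ⨆ i, σ i :=
        le_mul_of_one_le_left (Real.iSup_nonneg hσ) (Real.one_le_sqrt.mpr (by exact_mod_cast hr))

lemma contraction_factor_le {d s δ : ℝ} (hs : 0 < s) (hδ : δ ≤ 1 / 12) (hd : d ≤ s / 6) :
    2 * (2 * δ / (1 - δ) + d / s) ≤ 23 / 33 := by
  have hgradient : 2 * δ / (1 - δ) ≤ 2 / 11 := by
    rw [div_le_div_iff₀ (by linarith) (by norm_num)]
    linarith
  have hcurvature : d / s ≤ 1 / 6 := by
    rw [div_le_iff₀ hs]
    linarith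
  linarith

/-- RGrad, matrix sensing with spectral initialization: under the
rank-`3r` RIP with `δ_{3r} < 1/(12 κ √r)`, Riemannian gradient descent converges
linearly: `‖Z_k − X‖_F ≤ ρᵏ ‖Z₀ − X‖_F` for some `ρ ∈ (0,1)`. -/
theorem rgrad_matrix_sensing (n m r : ℕ)
    (X : Matrix (Fin n) (Fin n) ℝ) (U V : Matrix (Fin n) (Fin r) ℝ) (σ : Fin r → ℝ)
    -- compact SVD of X (so κ = (⨆ i, σ i)/(⨅ i, σ i))
    (hU : Uᵀ * U = 1) (hV : Vᵀ * V = 1) (hσ : ∀ i, 0 < σ i)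
    (hX : X = U * Matrix.diagonal σ * Vᵀ) (hrank : X.rank = r)
    (𝒜 : Matrix (Fin n) (Fin n) ℝ →ₗ[ℝ] (Fin m → ℝ))
    (𝒜s : (Fin m → ℝ) →ₗ[ℝ] Matrix (Fin n) (Fin n) ℝ)
    (hadj : ∀ (Z : Matrix (Fin n) (Fin n) ℝ) (w : Fin m → ℝ),
      frobInner (𝒜s w) Z = ∑ ℓ, w ℓ * 𝒜 Z ℓ)
    (δ : ℝ) (hδ0 : 0 < δ)
    (hδ : δ < 1 / (12 * ((⨆ i, σ i) / (⨅ i, σ i)) * Real.sqrt r))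
    (hRIP : HasRIP (fun Z => 𝒜 Z) (3 * r) δ)
    (y : Fin m → ℝ) (hy : y = 𝒜 X)
    (Z : ℕ → Matrix (Fin n) (Fin n) ℝ)
    -- spectral initialization Z₀ = 𝒯_r(𝒜*(y))
    (hinit : IsBestRankApprox r (𝒜s y) (Z 0))
    -- RGrad iteration
    (hiter : ∀ k, ∃ (Uk Vk : Matrix (Fin n) (Fin r) ℝ) (σk : Fin r → ℝ)
      (P : Matrix (Fin n) (Fin n) ℝ),
      Ukᵀ * Uk = 1 ∧ Vkᵀ * Vk = 1 ∧ (∀ i, 0 ≤ σk i) ∧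
      Z k = Uk * Matrix.diagonal σk * Vkᵀ ∧
      IsTanProj Uk Vk (𝒜s (y - 𝒜 (Z k))) P ∧
      IsBestRankApprox r
        (Z k + (frobNorm P ^ 2 / l2norm (𝒜 P) ^ 2) • P) (Z (k + 1))) :
    ∃ ρ : ℝ, 0 < ρ ∧ ρ < 1 ∧
      ∀ k, frobNorm (Z k - X) ≤ ρ ^ k * frobNorm (Z 0 - X) := by
  subst hy
  set s := ⨅ i, σ i
  have hσ_nonneg : ∀ i, 0 ≤ σ i := fun i => (hσ i).le
  have hs_le : ∀ i, s ≤ σ i := ciInf_le (Set.finite_range σ).bddBelow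
  have hcond : 12 * δ * (√r * ⨆ i, σ i) < s :=
    condition_mul_lt_of_lt_one_div hδ0 (Real.iInf_nonneg hσ_nonneg) hδ
  have hs : 0 < s := hcond.trans_le' <|
    mul_nonneg (by positivity) (mul_nonneg (Real.sqrt_nonneg _) (Real.iSup_nonneg hσ_nonneg))
  have hδ_le : δ ≤ 1 / 12 := by nlinarith [iInf_le_sqrt_mul_iSup hσ_nonneg]
  have hbasin : frobNorm (Z 0 - X) ≤ s / 6 :=
    calc frobNorm (Z 0 - X) ≤ 2 * δ * frobNorm X :=
          frobNorm_spectral_initialization_sub_le hadj hRIP hrank.le hinit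
      _ ≤ 2 * δ * (√r * ⨆ i, σ i) := by rw [hX]; gcongr; exact frobNorm_svd_le hU hV hσ_nonneg
      _ ≤ s / 6 := by linarith
  refine ⟨23 / 33, by norm_num, by norm_num,
    le_pow_mul_of_basin (fun _ => Real.sqrt_nonneg _) (by norm_num) (by norm_num) hbasin ?_⟩
  intro k hk
  obtain ⟨Uk, Vk, σk, P, hUk, hVk, -, hZ, hP, hnext⟩ := hiter k
  refine (frobNorm_rgrad_step_sub_le hU hV hs hs_le hX hrank.le hadj hRIP hδ0.le
    (by linarith) hUk hVk hZ hP hnext).trans ?_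
  exact mul_le_mul_of_nonneg_right (contraction_factor_le hs hδ_le hk) (Real.sqrt_nonneg _)
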